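/- arXiv:1911.01689 — 5 statements merged into one kernel-verified Lean document; each statement's English description precedes it below -/
import Mathlib

section
/- Let A and B be C*-algebras, δ ≥ 0, and let φ : A → B be a bounded linear map which is δ-self-adjoint. Then the map ψ := (1/2)(φ + φ*) (where φ*(x) := φ(x*)*) is self-adjoint and satisfies ‖φ − ψ‖ ≤ δ/2. Moreover, if in addition φ is an ε-order zero map for some ε ≥ 0, then ψ is an (ε + (δ/2)‖φ‖)-order zero map. -/
/-- `φ` is an ε-order zero map: `‖φ(x)φ(y)‖ ≤ ε‖x‖‖y‖` for all positive `x, y` with `xy = 0`. -/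
def IsEpsOrderZero {A B : Type*} [NonUnitalCStarAlgebra A] [PartialOrder A] [StarOrderedRing A]
    [NonUnitalCStarAlgebra B] (ε : ℝ) (φ : A →L[ℂ] B) : Prop :=
  ∀ x y : A, 0 ≤ x → 0 ≤ y → x * y = 0 → ‖φ x * φ y‖ ≤ ε * ‖x‖ * ‖y‖

/-- `φ` is δ-self-adjoint: `‖φ(x*) − φ(x)*‖ ≤ δ‖x‖` for all `x`. -/
def IsDeltaSelfAdjoint {A B : Type*} [NonUnitalCStarAlgebra A] [NonUnitalCStarAlgebra B]
    (δ : ℝ) (φ : A →L[ℂ] B) : Prop :=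
  ∀ x : A, ‖φ (star x) - star (φ x)‖ ≤ δ * ‖x‖

section IntrinsicRealPart

open ComplexStarModule WithConv

variable {E F : Type*}
  [AddCommGroup E] [Module ℂ E] [StarAddMonoid E] [StarModule ℂ E]
  [TopologicalSpace E] [ContinuousStar E]
  [AddCommGroup F] [Module ℂ F] [StarAddMonoid F] [StarModule ℂ F]
  [TopologicalSpace F] [ContinuousStar F] [IsTopologicalAddGroup F] [ContinuousConstSMul ℂ F]

/-- The self-adjoint part `(1/2)(φ + φ*)` of a continuous linear map `φ` with respect to the
intrinsic star `φ*(x) = φ(x*)*`. Mathlib puts this star on the type synonym `WithConv`, because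
`star` on `E →L[ℂ] E` itself denotes the Hilbert space adjoint. -/
noncomputable def intrinsicRealPart (φ : E →L[ℂ] F) : E →L[ℂ] F :=
  (ℜ (toConv φ) : WithConv (E →L[ℂ] F)).ofConv

theorem intrinsicRealPart_apply (φ : E →L[ℂ] F) (x : E) :
    intrinsicRealPart φ x = (2⁻¹ : ℂ) • (φ x + star (φ (star x))) := by
  have h : (ℜ (toConv φ) : WithConv (E →L[ℂ] F)) = (2⁻¹ : ℂ) • (toConv φ + star (toConv φ)) := by
    rw [realPart_apply_coe, ← Complex.coe_smul, Complex.ofReal_inv, Complex.ofReal_ofNat]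
  rw [intrinsicRealPart, h]
  rfl

theorem intrinsicRealPart_star (φ : E →L[ℂ] F) (x : E) :
    intrinsicRealPart φ (star x) = star (intrinsicRealPart φ x) :=
  (ContinuousLinearMap.IntrinsicStar.isSelfAdjoint_iff_map_star _).mp (ℜ (toConv φ)).property x

theorem intrinsicRealPart_apply_of_isSelfAdjoint (φ : E →L[ℂ] F) {x : E} (hx : IsSelfAdjoint x) :
    intrinsicRealPart φ x = (2⁻¹ : ℂ) • (φ x + star (φ x)) := by
  rw [intrinsicRealPart_apply, hx.star_eq]

theorem sub_intrinsicRealPart_apply (φ : E →L[ℂ] F) (x : E) :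
    (φ - intrinsicRealPart φ) x = (2⁻¹ : ℂ) • (φ x - star (φ (star x))) := by
  rw [sub_apply, intrinsicRealPart_apply]
  module

end IntrinsicRealPart

theorem norm_add_star_mul_add_star_le {R : Type*} [NonUnitalSeminormedRing R] [StarRing R]
    [NormedStarGroup R] (a b : R) :
    ‖(a + star a) * (b + star b)‖ ≤
      3 * ‖a * b‖ + ‖b * a‖ + ‖a‖ * ‖b - star b‖ + ‖a - star a‖ * ‖b‖ := by
  -- Each mixed product `a * star b`, `star a * b` is `a * b` up to one self-adjointness defect.
  have expand : (a + star a) * (b + star b) =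
      a * b + star (b * a) + (a * b - a * (b - star b)) + (a * b - (a - star a) * b) := by
    rw [star_mul]
    noncomm_ring
  calc ‖(a + star a) * (b + star b)‖
      ≤ ‖a * b‖ + ‖star (b * a)‖ + (‖a * b‖ + ‖a * (b - star b)‖)
          + (‖a * b‖ + ‖(a - star a) * b‖) := by
        rw [expand]
        exact norm_add_le_of_le (norm_add_le_of_le (norm_add_le _ _) (norm_sub_le _ _))
          (norm_sub_le _ _)
    _ ≤ ‖a * b‖ + ‖b * a‖ + (‖a * b‖ + ‖a‖ * ‖b - star b‖)
          + (‖a * b‖ + ‖a - star a‖ * ‖b‖) := by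
        rw [norm_star]
        gcongr <;> exact norm_mul_le _ _
    _ = 3 * ‖a * b‖ + ‖b * a‖ + ‖a‖ * ‖b - star b‖ + ‖a - star a‖ * ‖b‖ := by ring

section CStarAlgebra

variable {A B : Type*} [NonUnitalCStarAlgebra A] [NonUnitalCStarAlgebra B]
  {δ ε : ℝ} {φ : A →L[ℂ] B}

theorem IsDeltaSelfAdjoint.norm_sub_star_le_of_isSelfAdjoint (hφ : IsDeltaSelfAdjoint δ φ) {x : A}
    (hx : IsSelfAdjoint x) : ‖φ x - star (φ x)‖ ≤ δ * ‖x‖ := by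
  simpa only [hx.star_eq] using hφ x

theorem IsDeltaSelfAdjoint.norm_sub_intrinsicRealPart_le (hφ : IsDeltaSelfAdjoint δ φ)
    (hδ : 0 ≤ δ) : ‖φ - intrinsicRealPart φ‖ ≤ δ / 2 := by
  refine ContinuousLinearMap.opNorm_le_bound _ (by positivity) fun x => ?_
  have defect_le : ‖φ x - star (φ (star x))‖ ≤ δ * ‖x‖ := by
    simpa only [star_star, norm_star] using hφ (star x)
  calc ‖(φ - intrinsicRealPart φ) x‖ = 2⁻¹ * ‖φ x - star (φ (star x))‖ := by
        rw [sub_intrinsicRealPart_apply, norm_smul, norm_inv, Complex.norm_ofNat]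
    _ ≤ 2⁻¹ * (δ * ‖x‖) := by gcongr
    _ = δ / 2 * ‖x‖ := by ring

variable [PartialOrder A] [StarOrderedRing A]

theorem IsEpsOrderZero.intrinsicRealPart (h : IsEpsOrderZero ε φ) (hφ : IsDeltaSelfAdjoint δ φ) :
    IsEpsOrderZero (ε + δ / 2 * ‖φ‖) (intrinsicRealPart φ) := by
  intro x y hx hy hxy
  have hx' : IsSelfAdjoint x := .of_nonneg hx
  have hy' : IsSelfAdjoint y := .of_nonneg hy
  have hyx : y * x = 0 := (hx'.commute_of_mul_eq_zero hy' hxy).eq.symm.trans hxy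
  rw [intrinsicRealPart_apply_of_isSelfAdjoint φ hx',
    intrinsicRealPart_apply_of_isSelfAdjoint φ hy']
  calc ‖((2⁻¹ : ℂ) • (φ x + star (φ x))) * ((2⁻¹ : ℂ) • (φ y + star (φ y)))‖
      = 4⁻¹ * ‖(φ x + star (φ x)) * (φ y + star (φ y))‖ := by
        rw [smul_mul_smul_comm, norm_smul]
        norm_num
    _ ≤ 4⁻¹ * (3 * ‖φ x * φ y‖ + ‖φ y * φ x‖ + ‖φ x‖ * ‖φ y - star (φ y)‖
          + ‖φ x - star (φ x)‖ * ‖φ y‖) := by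
        gcongr
        exact norm_add_star_mul_add_star_le _ _
    _ ≤ 4⁻¹ * (3 * (ε * ‖x‖ * ‖y‖) + ε * ‖y‖ * ‖x‖ + ‖φ‖ * ‖x‖ * (δ * ‖y‖)
          + δ * ‖x‖ * (‖φ‖ * ‖y‖)) := by
        have defect_x := hφ.norm_sub_star_le_of_isSelfAdjoint hx'
        have defect_y := hφ.norm_sub_star_le_of_isSelfAdjoint hy'
        gcongr
        · exact h x y hx hy hxy
        · exact h y x hy hx hyx
        · exact φ.le_opNorm x
        · exact (norm_nonneg _).trans defect_x
        · exact φ.le_opNorm y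
    _ = (ε + δ / 2 * ‖φ‖) * ‖x‖ * ‖y‖ := by ring

end CStarAlgebra

/-- If `φ` is δ-self-adjoint then the map `ψ = (1/2)(φ + φ*)`, where
`φ*(x) = φ(x*)*`, is self-adjoint and satisfies `‖φ − ψ‖ ≤ δ/2`; moreover, if `φ` is
ε-order zero then `ψ` is `(ε + (δ/2)‖φ‖)`-order zero. -/
theorem stmt_1 {A B : Type*} [NonUnitalCStarAlgebra A] [PartialOrder A] [StarOrderedRing A]
    [NonUnitalCStarAlgebra B] (δ : ℝ) (hδ : 0 ≤ δ) (φ : A →L[ℂ] B)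
    (hφ : IsDeltaSelfAdjoint δ φ) :
    ∃ ψ : A →L[ℂ] B,
      (∀ x : A, ψ x = (2⁻¹ : ℂ) • (φ x + star (φ (star x)))) ∧
      (∀ x : A, ψ (star x) = star (ψ x)) ∧
      ‖φ - ψ‖ ≤ δ / 2 ∧
      ∀ ε : ℝ, 0 ≤ ε → IsEpsOrderZero ε φ → IsEpsOrderZero (ε + δ / 2 * ‖φ‖) ψ :=
  ⟨intrinsicRealPart φ, intrinsicRealPart_apply φ, intrinsicRealPart_star φ,
    hφ.norm_sub_intrinsicRealPart_le hδ, fun _ _ h => h.intrinsicRealPart hφ⟩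
end

section
/- Let A and B be C*-algebras and φ : A → B a bounded linear ε-order zero map. Then for all x, y ∈ A which are orthogonal (x ⊥ y) one has ‖φ(x)φ(y)‖ ≤ 16ε‖x‖‖y‖. -/
/-- `x ⊥ y` in a C*-algebra: `xy = yx = x*y = xy* = 0`. -/
def AreOrthogonal {A : Type*} [NonUnitalCStarAlgebra A] (x y : A) : Prop :=
  x * y = 0 ∧ y * x = 0 ∧ star x * y = 0 ∧ x * star y = 0

/-!
The elements orthogonal to a fixed `y` form a C*-subalgebra, so the decomposition of an orthogonal
element into four positive ones can be carried out inside it: the positive parts are again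
orthogonal to `y`. A bound on positive elements therefore costs a factor `4` when extended to all
elements orthogonal to `y`, and doing this in each variable of `(x, y) ↦ φ x * φ y` gives
`16 = 4 * 4`.
-/

section PositiveElements

variable {A E : Type*} [NonUnitalCStarAlgebra A] [PartialOrder A] [StarOrderedRing A]
  [SeminormedAddCommGroup E] [NormedSpace ℂ E]

open Complex in
theorem exists_sum_four_nonneg_mem {S : NonUnitalStarSubalgebra ℂ A}
    (hS : IsClosed (S : Set A)) {x : A} (hx : x ∈ S) :
    ∃ p : Fin 4 → A, (∀ i, p i ∈ S) ∧ (∀ i, 0 ≤ p i) ∧ (∀ i, ‖p i‖ ≤ ‖x‖) ∧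
      x = ∑ i : Fin 4, I ^ (i : ℕ) • p i := by
  let : NonUnitalCStarAlgebra S := NonUnitalStarSubalgebra.nonUnitalCStarAlgebra S
  let : PartialOrder S := CStarAlgebra.spectralOrder S
  have : StarOrderedRing S := CStarAlgebra.spectralOrderedRing S
  obtain ⟨p, hp_nonneg, hp_norm, hp_sum⟩ :=
    CStarAlgebra.exists_sum_four_nonneg (⟨x, hx⟩ : S)
  refine ⟨fun i ↦ p i, fun i ↦ (p i).2, fun i ↦ ?_, hp_norm, ?_⟩
  · obtain ⟨s, hs⟩ := CStarAlgebra.nonneg_iff_eq_star_mul_self.mp (hp_nonneg i)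
    simp [hs, star_mul_self_nonneg]
  · simpa using congr(S.subtype $hp_sum)

theorem norm_map_le_four_mul_of_forall_nonneg {S : NonUnitalStarSubalgebra ℂ A}
    (hS : IsClosed (S : Set A)) {f : A →ₗ[ℂ] E} {C : ℝ}
    (hf : ∀ p ∈ S, 0 ≤ p → ‖f p‖ ≤ C * ‖p‖) {x : A} (hx : x ∈ S) : ‖f x‖ ≤ 4 * C * ‖x‖ := by
  rcases eq_or_ne x 0 with rfl | hx_ne
  · simp
  have hC : 0 ≤ C := by
    have hpos : 0 < ‖star x * x‖ := by simpa using hx_ne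
    have hbound := hf _ (mul_mem (star_mem hx) hx) (star_mul_self_nonneg x)
    exact nonneg_of_mul_nonneg_left ((norm_nonneg _).trans hbound) hpos
  obtain ⟨p, hp_mem, hp_nonneg, hp_norm, hp_sum⟩ := exists_sum_four_nonneg_mem hS hx
  calc ‖f x‖ = ‖∑ i : Fin 4, Complex.I ^ (i : ℕ) • f (p i)‖ := by
        conv_lhs => rw [hp_sum]
        simp only [map_sum, map_smul]
    _ ≤ ∑ _i : Fin 4, C * ‖x‖ := norm_sum_le_of_le _ fun i _ ↦ by
        simpa [norm_smul] using
          (hf _ (hp_mem i) (hp_nonneg i)).trans (mul_le_mul_of_nonneg_left (hp_norm i) hC)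
    _ = 4 * C * ‖x‖ := by simp [mul_assoc]

end PositiveElements

section Orthogonality

variable {A : Type*} [NonUnitalCStarAlgebra A]

theorem AreOrthogonal.symm {x y : A} (h : AreOrthogonal x y) : AreOrthogonal y x := by
  obtain ⟨hxy, hyx, hsxy, hxsy⟩ := h
  exact ⟨hyx, hxy, by simpa using congr(star $hsxy), by simpa using congr(star $hxsy)⟩

/-- The C*-subalgebra `{x | x ⊥ y}` of elements orthogonal to `y`; see
`isClosed_orthogonalStarSubalgebra` for closedness. -/
def orthogonalStarSubalgebra (y : A) : NonUnitalStarSubalgebra ℂ A where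
  carrier := {x | AreOrthogonal x y}
  zero_mem' := by simp [AreOrthogonal]
  add_mem' := by
    rintro a b ⟨hay, hya, hsay, hasy⟩ ⟨hby, hyb, hsby, hbsy⟩
    simp [AreOrthogonal, add_mul, mul_add, *]
  mul_mem' := by
    rintro a b ⟨-, hya, hsay, -⟩ ⟨hby, -, -, hbsy⟩
    refine ⟨?_, ?_, ?_, ?_⟩
    · rw [mul_assoc, hby, mul_zero]
    · rw [← mul_assoc, hya, zero_mul]
    · rw [star_mul, mul_assoc, hsay, mul_zero]
    · rw [mul_assoc, hbsy, mul_zero]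
  smul_mem' := by
    rintro c a ⟨hay, hya, hsay, hasy⟩
    simp [AreOrthogonal, smul_mul_assoc, mul_smul_comm, *]
  star_mem' := by
    rintro a ⟨hay, hya, hsay, hasy⟩
    exact ⟨hsay, by simpa using congr(star $hasy), by rwa [star_star],
      by rw [← star_mul, hya, star_zero]⟩

theorem isClosed_orthogonalStarSubalgebra (y : A) :
    IsClosed (orthogonalStarSubalgebra y : Set A) := by
  have hclosed {g : A → A} (hg : Continuous g) : IsClosed {x | g x = 0} :=
    isClosed_eq hg continuous_const
  exact (hclosed (by fun_prop)).inter <| (hclosed (by fun_prop)).inter <|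
    (hclosed (by fun_prop)).inter (hclosed (by fun_prop))

end Orthogonality

theorem stmt_3_general {A E : Type*} [NonUnitalCStarAlgebra A] [PartialOrder A]
    [StarOrderedRing A] [SeminormedAddCommGroup E] [NormedSpace ℂ E] {ε : ℝ}
    {T : A →ₗ[ℂ] A →ₗ[ℂ] E}
    (hT : ∀ p q, 0 ≤ p → 0 ≤ q → p * q = 0 → ‖T p q‖ ≤ ε * ‖p‖ * ‖q‖)
    {x y : A} (hxy : AreOrthogonal x y) : ‖T x y‖ ≤ 16 * ε * ‖x‖ * ‖y‖ := by
  have bound_of_nonneg_right : ∀ q ∈ orthogonalStarSubalgebra x, 0 ≤ q →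
      ‖T x q‖ ≤ 4 * ε * ‖x‖ * ‖q‖ := by
    intro q hqx hq
    have hbound : ‖T.flip q x‖ ≤ 4 * (ε * ‖q‖) * ‖x‖ :=
      norm_map_le_four_mul_of_forall_nonneg (isClosed_orthogonalStarSubalgebra q)
        (fun p hpq hp ↦ (hT p q hp hq hpq.1).trans_eq (mul_right_comm ..)) hqx.symm
    exact hbound.trans_eq (by ring)
  calc ‖T x y‖ ≤ 4 * (4 * ε * ‖x‖) * ‖y‖ :=
        norm_map_le_four_mul_of_forall_nonneg (isClosed_orthogonalStarSubalgebra x)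
          bound_of_nonneg_right hxy.symm
    _ = 16 * ε * ‖x‖ * ‖y‖ := by ring

/-- If `φ` is a bounded linear ε-order zero map between C*-algebras, then for
all orthogonal `x, y` one has `‖φ(x)φ(y)‖ ≤ 16ε‖x‖‖y‖`. -/
theorem stmt_3 {A B : Type*} [NonUnitalCStarAlgebra A] [PartialOrder A] [StarOrderedRing A]
    [NonUnitalCStarAlgebra B] (ε : ℝ) (φ : A →L[ℂ] B) (hφ : IsEpsOrderZero ε φ)
    (x y : A) (hxy : AreOrthogonal x y) :
    ‖φ x * φ y‖ ≤ 16 * ε * ‖x‖ * ‖y‖ :=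
  stmt_3_general (T := (LinearMap.mul ℂ B).compl₁₂ (φ : A →ₗ[ℂ] B) (φ : A →ₗ[ℂ] B)) hφ hxy
end

section
/- Let A and B be C*-algebras and φ : A → B a bounded linear ε-order zero map which is a positive contraction (‖φ‖ ≤ 1) satisfying the Schwarz inequality φ(x)*φ(x) ≤ φ(x*x) for all x ∈ A (this holds in particular for every completely positive contraction, by Kadison's inequality). Then for all x, y ∈ A which are orthogonal (x ⊥ y) one has ‖φ(x)φ(y)‖ ≤ ε^{1/2}‖x‖‖y‖. -/
/-! If `star a * a ≤ c` and `b * star b ≤ d` in a C⋆-algebra, then `‖a * b‖ ^ 2 ≤ ‖c * d‖`: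
conjugating the first inequality by `b` and the second by `√c` gives
`‖a * b‖ ^ 2 ≤ ‖√c * d * √c‖`, and since `√c * d * √c` is self-adjoint, its norm is read off its
spectrum, which up to `0` is that of `c * d`. The Schwarz inequality for `x` and `star y` therefore
gives `‖φ x * φ y‖ ^ 2 ≤ ‖φ (star x * x) * φ (y * star y)‖`, where the arguments on the right are
positive with product zero as soon as `x * y = 0`. -/

lemma norm_le_norm_of_mem_quasispectrum {𝕜 A : Type*} [NontriviallyNormedField 𝕜] [CompleteSpace 𝕜]
    [NonUnitalNormedRing A] [NormedSpace 𝕜 A] [IsScalarTower 𝕜 A A] [SMulCommClass 𝕜 A A]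
    [RegularNormedAlgebra 𝕜 A] [CompleteSpace A] {a : A} {k : 𝕜} (hk : k ∈ quasispectrum 𝕜 a) :
    ‖k‖ ≤ ‖a‖ := by
  rw [Unitization.quasispectrum_eq_spectrum_inr] at hk
  simpa only [Unitization.norm_inr] using spectrum.norm_le_norm_of_mem hk

section NormInequalities

variable {B : Type*} [NonUnitalCStarAlgebra B]

lemma norm_mul_le_norm_mul_swap_of_isStarNormal (a b : B) [IsStarNormal (a * b)] :
    ‖a * b‖ ≤ ‖b * a‖ := by
  obtain ⟨k, hk, hk_norm⟩ :=
    (NonUnitalIsometricContinuousFunctionalCalculus.isGreatest_norm_quasispectrum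
      (𝕜 := ℂ) (a * b)).1
  rw [quasispectrum.mul_comm] at hk
  exact hk_norm.symm.trans_le (norm_le_norm_of_mem_quasispectrum hk)

variable [PartialOrder B] [StarOrderedRing B]

lemma norm_sqrt_mul_mul_sqrt_le {c d : B} (hc : 0 ≤ c) (hd : IsSelfAdjoint d) :
    ‖CFC.sqrt c * d * CFC.sqrt c‖ ≤ ‖c * d‖ := by
  have hsqrt : IsSelfAdjoint (CFC.sqrt c) := (CFC.sqrt_nonneg c).isSelfAdjoint
  have : IsStarNormal (CFC.sqrt c * d * CFC.sqrt c) := (hd.conjugate_self hsqrt).isStarNormal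
  calc ‖CFC.sqrt c * d * CFC.sqrt c‖ ≤ ‖CFC.sqrt c * (CFC.sqrt c * d)‖ :=
        norm_mul_le_norm_mul_swap_of_isStarNormal _ _
    _ = ‖c * d‖ := by rw [← mul_assoc, CFC.sqrt_mul_sqrt_self c]

lemma norm_mul_sq_le_norm_mul_of_star_mul_self_le {a b c d : B} (hac : star a * a ≤ c)
    (hbd : b * star b ≤ d) : ‖a * b‖ ^ 2 ≤ ‖c * d‖ := by
  have hc : 0 ≤ c := (star_mul_self_nonneg a).trans hac
  have hd : 0 ≤ d := (mul_star_self_nonneg b).trans hbd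
  have hsqrt : IsSelfAdjoint (CFC.sqrt c) := (CFC.sqrt_nonneg c).isSelfAdjoint
  calc ‖a * b‖ ^ 2 = ‖star b * (star a * a) * b‖ := by
        rw [sq, ← CStarRing.norm_star_mul_self, star_mul]
        simp only [mul_assoc]
    _ ≤ ‖star b * c * b‖ :=
        CStarAlgebra.norm_le_norm_of_nonneg_of_le
          (star_left_conjugate_nonneg (star_mul_self_nonneg a) b)
          (star_left_conjugate_le_conjugate hac b)
    _ = ‖CFC.sqrt c * (b * star b) * CFC.sqrt c‖ := by
        rw [CFC.norm_star_mul_mul_self_of_nonneg b hc, sq, ← CStarRing.norm_self_mul_star, star_mul,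
          hsqrt.star_eq]
        simp only [mul_assoc]
    _ ≤ ‖CFC.sqrt c * d * CFC.sqrt c‖ :=
        CStarAlgebra.norm_le_norm_of_nonneg_of_le
          (hsqrt.conjugate_nonneg (mul_star_self_nonneg b))
          (hsqrt.conjugate_le_conjugate hbd)
    _ ≤ ‖c * d‖ := norm_sqrt_mul_mul_sqrt_le hc hd.isSelfAdjoint

end NormInequalities

section Schwarz

variable {A B : Type*} [NonUnitalCStarAlgebra A] [PartialOrder A] [StarOrderedRing A]

lemma map_nonneg_of_schwarz [NonUnitalSemiring B] [PartialOrder B] [StarRing B] [StarOrderedRing B]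
    {φ : A → B} (hschwarz : ∀ x, star (φ x) * φ x ≤ φ (star x * x)) {x : A} (hx : 0 ≤ x) :
    0 ≤ φ x := by
  obtain ⟨z, rfl⟩ := CStarAlgebra.nonneg_iff_eq_star_mul_self.mp hx
  exact (star_mul_self_nonneg (φ z)).trans (hschwarz z)

variable [NonUnitalCStarAlgebra B] [PartialOrder B] [StarOrderedRing B]

lemma map_star_of_schwarz {φ : A →ₗ[ℂ] B} (hschwarz : ∀ x, star (φ x) * φ x ≤ φ (star x * x))
    (x : A) : φ (star x) = star (φ x) :=
  map_star (PositiveLinearMap.mk₀ φ fun _ ↦ map_nonneg_of_schwarz hschwarz) x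

lemma norm_map_mul_map_sq_le_of_schwarz {φ : A →ₗ[ℂ] B}
    (hschwarz : ∀ x, star (φ x) * φ x ≤ φ (star x * x)) (x y : A) :
    ‖φ x * φ y‖ ^ 2 ≤ ‖φ (star x * x) * φ (y * star y)‖ := by
  refine norm_mul_sq_le_norm_mul_of_star_mul_self_le (hschwarz x) ?_
  simpa only [map_star_of_schwarz hschwarz, star_star] using hschwarz (star y)

theorem stmt_4_general (ε : ℝ) (φ : A →L[ℂ] B) (hφ : IsEpsOrderZero ε φ)
    (hschwarz : ∀ x : A, star (φ x) * φ x ≤ φ (star x * x)) (x y : A) (hxy : x * y = 0) :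
    ‖φ x * φ y‖ ≤ Real.sqrt ε * ‖x‖ * ‖y‖ := by
  have hprod : star x * x * (y * star y) = 0 := by
    rw [mul_assoc, ← mul_assoc x, hxy, zero_mul, mul_zero]
  refine le_of_sq_le_sq ?_ (by positivity)
  calc ‖φ x * φ y‖ ^ 2 ≤ ‖φ (star x * x) * φ (y * star y)‖ :=
        norm_map_mul_map_sq_le_of_schwarz (φ := φ.toLinearMap) hschwarz x y
    _ ≤ ε * ‖star x * x‖ * ‖y * star y‖ :=
        hφ _ _ (star_mul_self_nonneg x) (mul_star_self_nonneg y) hprod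
    _ = ε * ‖x‖ ^ 2 * ‖y‖ ^ 2 := by
        rw [CStarRing.norm_star_mul_self, CStarRing.norm_self_mul_star, sq, sq]
    _ ≤ Real.sqrt ε ^ 2 * ‖x‖ ^ 2 * ‖y‖ ^ 2 := by
        gcongr
        rw [Real.sq_sqrt']
        exact le_max_left ε 0
    _ = (Real.sqrt ε * ‖x‖ * ‖y‖) ^ 2 := by ring

end Schwarz

/-- If `φ` is a bounded linear ε-order zero map between C*-algebras which is a
positive contraction satisfying the Schwarz inequality `φ(x)*φ(x) ≤ φ(x*x)`, then for all
orthogonal `x, y` one has `‖φ(x)φ(y)‖ ≤ ε^(1/2)‖x‖‖y‖`. -/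
theorem stmt_4 {A B : Type*} [NonUnitalCStarAlgebra A] [PartialOrder A] [StarOrderedRing A]
    [NonUnitalCStarAlgebra B] [PartialOrder B] [StarOrderedRing B]
    (ε : ℝ) (φ : A →L[ℂ] B) (hφ : IsEpsOrderZero ε φ)
    (hpos : ∀ x : A, 0 ≤ x → 0 ≤ φ x) (hcontr : ‖φ‖ ≤ 1)
    (hschwarz : ∀ x : A, star (φ x) * φ x ≤ φ (star x * x))
    (x y : A) (hxy : AreOrthogonal x y) :
    ‖φ x * φ y‖ ≤ Real.sqrt ε * ‖x‖ * ‖y‖ := by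
  exact stmt_4_general ε φ hφ hschwarz x y hxy.1
end

section
/- Let A and B be C*-algebras with A nonunital, let H be a complex Hilbert space, and let π : B → B(H) be a nondegenerate representation (a *-homomorphism such that the closed linear span of {π(b)ξ : b ∈ B, ξ ∈ H} equals H). Let φ : A → B be a bounded linear ε-order zero map. Then there exists a bounded linear map φ† : A† → B(H), taking values in the double commutant π(B)'' of π(B) in B(H), such that φ†(x) = π(φ(x)) for every x ∈ A, and φ† is an ε-order zero map. Moreover, if φ is δ-self-adjoint, then φ† can be chosen to be 6δ-self-adjoint. -/
/-!
Push `φ` forward to `ψ = π ∘ φ : A → B(H)` and let `e` run through an ultrafilter refining the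
canonical approximate unit of `A`. Norm-bounded sets of operators are relatively compact in the
weak operator topology, so `ψ e` converges weakly to some `T`, and `φ† (λ + a) = λ T + ψ a`.
Because `T` is a weak limit of values of `ψ`, it inherits membership in the double commutant and
approximate self-adjointness. For the order zero estimate, orthogonality of `x` and `y` in `A†`
puts one of them, say `x`, in `A`; then `√y e √y ∈ A` is positive, orthogonal to `x`, of norm at
most `‖y‖`, and `ψ (√y e √y)` converges weakly to `φ† y`. In a nonunital `A` there are nonzero
orthogonal positive elements, for otherwise a positive element of norm one would be a unit; they
force `ε ≥ 0`.
-/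

open Filter Topology
open scoped CStarAlgebra InnerProductSpace

section WeakOperatorTopology

open ContinuousLinearMapWOT

variable {𝕜 E F : Type*} [RCLike 𝕜] [NormedAddCommGroup E] [NormedSpace 𝕜 E]

lemma isClosed_setOf_norm_toCLM_le [NormedAddCommGroup F] [NormedSpace 𝕜 F] (r : ℝ) :
    IsClosed {S : E →WOT[𝕜] F | ‖S.toCLM‖ ≤ r} := by
  rcases lt_or_ge r 0 with hr | hr
  · convert isClosed_empty
    ext S
    simpa using hr.trans_le (norm_nonneg S.toCLM)
  have hset : {S : E →WOT[𝕜] F | ‖S.toCLM‖ ≤ r} =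
      ⋂ (x : E) (f : StrongDual 𝕜 F), {S | ‖f (S x)‖ ≤ r * ‖x‖ * ‖f‖} := by
    ext S
    simp only [Set.mem_ofPred_eq, Set.mem_iInter]
    constructor
    · intro hS x f
      calc ‖f (S x)‖ ≤ ‖f‖ * ‖S.toCLM x‖ := f.le_opNorm _
        _ ≤ ‖f‖ * (r * ‖x‖) := by gcongr; exact S.toCLM.le_of_opNorm_le hS x
        _ = r * ‖x‖ * ‖f‖ := mul_comm _ _
    · intro hS
      exact S.toCLM.opNorm_le_bound hr fun x =>
        NormedSpace.norm_le_dual_bound 𝕜 _ (by positivity) (hS x)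
  rw [hset]
  exact isClosed_iInter fun x => isClosed_iInter fun f =>
    isClosed_le (continuous_dual_apply x f).norm continuous_const

variable [NormedAddCommGroup F] [InnerProductSpace 𝕜 F] [CompleteSpace F]

lemma exists_tendsto_inner_of_eventually_norm_le {ι : Type*} (U : Ultrafilter ι) {u : ι → F} {r : ℝ}
    (hu : ∀ᶠ i in (U : Filter ι), ‖u i‖ ≤ r) :
    ∃ v : F, ‖v‖ ≤ r ∧ ∀ y : F, Tendsto (fun i => ⟪u i, y⟫_𝕜) U (𝓝 ⟪v, y⟫_𝕜) := by
  let toWeak (v : F) : WeakDual 𝕜 F := StrongDual.toWeakDual (InnerProductSpace.toDual 𝕜 F v)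
  have hball : ∀ᶠ i in (U : Filter ι),
      toWeak (u i) ∈ WeakDual.toStrongDual ⁻¹' Metric.closedBall (0 : StrongDual 𝕜 F) r := by
    filter_upwards [hu] with i hi
    simpa [toWeak] using hi
  obtain ⟨f, hf, hlim⟩ := (WeakDual.isCompact_closedBall 0 r).ultrafilter_le_nhds'
    (U.map fun i => toWeak (u i)) hball
  refine ⟨(InnerProductSpace.toDual 𝕜 F).symm (WeakDual.toStrongDual f), by simpa using hf, ?_⟩
  intro y
  rw [InnerProductSpace.toDual_symm_apply]
  exact ((WeakDual.eval_continuous y).tendsto f).comp hlim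

lemma isCompact_setOf_norm_toCLM_le (r : ℝ) :
    IsCompact {S : E →WOT[𝕜] F | ‖S.toCLM‖ ≤ r} := by
  refine isCompact_iff_ultrafilter_le_nhds'.mpr fun U hU => ?_
  have hbound (x : E) : ∀ᶠ S in (U : Filter (E →WOT[𝕜] F)), ‖S x‖ ≤ r * ‖x‖ := by
    filter_upwards [hU] with S hS using S.toCLM.le_of_opNorm_le hS x
  choose L hL hlim using fun x => exists_tendsto_inner_of_eventually_norm_le (𝕜 := 𝕜) U (hbound x)
  let L' : E →ₗ[𝕜] F :=
    { toFun := L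
      map_add' := fun x y => ext_inner_right 𝕜 fun z => tendsto_nhds_unique (hlim (x + y) z) <| by
        simpa [inner_add_left] using (hlim x z).add (hlim y z)
      map_smul' := fun c x => ext_inner_right 𝕜 fun z => tendsto_nhds_unique (hlim (c • x) z) <| by
        simpa [inner_smul_left] using (hlim x z).const_mul (starRingEnd 𝕜 c) }
  have hle : (U : Filter (E →WOT[𝕜] F)) ≤ 𝓝 (.ofCLM (L'.mkContinuous r hL)) := by
    refine le_nhds_iff_forall_inner_apply_le_nhds.mpr fun x y => ?_
    have hconj := (RCLike.continuous_conj.tendsto _).comp (hlim x y)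
    simp only [Function.comp_def, inner_conj_symm] at hconj
    exact hconj
  exact ⟨_, (isClosed_setOf_norm_toCLM_le r).mem_of_tendsto hle hU, hle⟩

end WeakOperatorTopology

section OrthogonalPositiveElements

variable {A : Type*} [NonUnitalCStarAlgebra A] [PartialOrder A] [StarOrderedRing A]

lemma mul_sqrt_eq_zero {x y : A} (hy : 0 ≤ y) (h : x * y = 0) : x * CFC.sqrt y = 0 := by
  have hsqrt : star (CFC.sqrt y) = CFC.sqrt y := (CFC.sqrt_nonneg y).isSelfAdjoint.star_eq
  rw [← CStarRing.mul_star_self_eq_zero_iff, star_mul, hsqrt, ← mul_assoc, mul_assoc x,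
    CFC.sqrt_mul_sqrt_self y hy, h, zero_mul]

lemma sqrt_mul_eq_zero {x y : A} (hy : 0 ≤ y) (h : y * x = 0) : CFC.sqrt y * x = 0 := by
  have hsqrt : star (CFC.sqrt y) = CFC.sqrt y := (CFC.sqrt_nonneg y).isSelfAdjoint.star_eq
  have hstar : star x * y = 0 := by
    rw [← star_star (star x * y), star_mul, star_star, hy.isSelfAdjoint.star_eq, h, star_zero]
  simpa [hsqrt] using congrArg star (mul_sqrt_eq_zero hy hstar)

lemma mul_self_le_norm_smul {a : A} (ha : 0 ≤ a) : a * a ≤ ‖a‖ • a := by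
  have hsqrt := (CFC.sqrt_nonneg a).isSelfAdjoint
  have hconj := CStarAlgebra.star_left_conjugate_le_norm_smul (a := CFC.sqrt a) ha.isSelfAdjoint
  have hcomm : CFC.sqrt a * a = a * CFC.sqrt a := by
    nth_rw 2 [← CFC.sqrt_mul_sqrt_self a ha]
    rw [← mul_assoc, CFC.sqrt_mul_sqrt_self a ha]
  rwa [hsqrt.star_eq, hcomm, mul_assoc, CFC.sqrt_mul_sqrt_self a ha] at hconj

lemma exists_nonneg_norm_eq_one [Nontrivial A] : ∃ a : A, 0 ≤ a ∧ ‖a‖ = 1 := by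
  obtain ⟨b, hb⟩ := exists_ne (0 : A)
  have hnorm : ‖star b * b‖ ≠ 0 := by simpa [CStarRing.norm_star_mul_self] using hb
  exact ⟨‖star b * b‖⁻¹ • (star b * b), smul_nonneg (by positivity) (star_mul_self_nonneg b),
    by simp [norm_smul, hnorm]⟩

lemma nonneg_or_nonpos_of_forall_mul_eq_zero
    (h : ∀ x y : A, 0 ≤ x → 0 ≤ y → x * y = 0 → x = 0 ∨ y = 0) {c : A} (hc : IsSelfAdjoint c) :
    0 ≤ c ∨ c ≤ 0 := by
  rw [← CFC.negPart_eq_zero_iff c hc, ← CFC.posPart_eq_zero_iff c hc, or_comm]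
  exact h c⁺ c⁻ (CFC.posPart_nonneg c) (CFC.negPart_nonneg c) (CFC.posPart_mul_negPart c)

/- With `d = a - a²`, compare `d` to `s a` for `s = ‖d‖ / 2`: if `d ≤ s a` then `‖d‖ ≤ ‖d‖ / 2`,
while `s a ≤ d` means `a² ≤ (1 - s) a`, contradicting `‖a²‖ = 1`. -/
lemma mul_self_eq_self_of_forall_mul_eq_zero
    (h : ∀ x y : A, 0 ≤ x → 0 ≤ y → x * y = 0 → x = 0 ∨ y = 0) {a : A} (ha : 0 ≤ a)
    (hnorm : ‖a‖ = 1) : a * a = a := by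
  have hsq_nonneg : 0 ≤ a * a := ha.isSelfAdjoint.mul_self_nonneg
  have hsq_norm : ‖a * a‖ = 1 := by
    rw [ha.isSelfAdjoint.norm_mul_self, hnorm, one_pow]
  have hd_nonneg : 0 ≤ a - a * a := by
    simpa [hnorm] using mul_self_le_norm_smul ha
  have hd_norm : ‖a - a * a‖ ≤ 1 :=
    hnorm ▸ CStarAlgebra.norm_le_norm_of_nonneg_of_le hd_nonneg (sub_le_self a hsq_nonneg)
  by_contra hne
  have hd_pos : 0 < ‖a - a * a‖ := norm_pos_iff.mpr (sub_ne_zero.mpr (Ne.symm hne))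
  set s := ‖a - a * a‖ / 2 with hs
  have hsa : IsSelfAdjoint (a - a * a - s • a) :=
    hd_nonneg.isSelfAdjoint.sub ((IsSelfAdjoint.all s).smul ha.isSelfAdjoint)
  rcases nonneg_or_nonpos_of_forall_mul_eq_zero h hsa with hge | hle
  · have hsq_le : a * a ≤ (1 - s) • a := by
      rw [← sub_nonneg]
      convert hge using 1
      module
    have := CStarAlgebra.norm_le_norm_of_nonneg_of_le hsq_nonneg hsq_le
    rw [hsq_norm, norm_smul, hnorm, Real.norm_of_nonneg (by linarith)] at this
    linarith
  · have := CStarAlgebra.norm_le_norm_of_nonneg_of_le hd_nonneg (sub_nonpos.mp hle)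
    rw [norm_smul, hnorm, Real.norm_of_nonneg (by linarith)] at this
    linarith

lemma exists_nonneg_mul_eq_zero_of_not_exists_unit
    (h_nonunital : ¬ ∃ e : A, ∀ a : A, e * a = a ∧ a * e = a) :
    ∃ x y : A, 0 ≤ x ∧ 0 ≤ y ∧ x * y = 0 ∧ x ≠ 0 ∧ y ≠ 0 := by
  by_contra! hcon
  have h (x y : A) (hx : 0 ≤ x) (hy : 0 ≤ y) (hxy : x * y = 0) : x = 0 ∨ y = 0 :=
    or_iff_not_imp_left.mpr (hcon x y hx hy hxy)
  apply h_nonunital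
  rcases subsingleton_or_nontrivial A with _ | _
  · exact ⟨0, fun a => ⟨Subsingleton.elim _ _, Subsingleton.elim _ _⟩⟩
  obtain ⟨p, hp, hp_norm⟩ := exists_nonneg_norm_eq_one (A := A)
  have hp_ne : p ≠ 0 := norm_ne_zero_iff.mp (hp_norm ▸ one_ne_zero)
  have hp_idem : p * p = p := mul_self_eq_self_of_forall_mul_eq_zero h hp hp_norm
  have hp_left (b : A) : p * b = b := by
    have horth : p * ((b - p * b) * star (b - p * b)) = 0 := by
      rw [← mul_assoc, mul_sub, ← mul_assoc, hp_idem, sub_self, zero_mul]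
    have hzero := hcon p _ hp (mul_star_self_nonneg _) horth hp_ne
    exact (sub_eq_zero.mp ((CStarRing.mul_star_self_eq_zero_iff _).mp hzero)).symm
  refine ⟨p, fun b => ⟨hp_left b, ?_⟩⟩
  simpa [hp.isSelfAdjoint.star_eq] using congrArg star (hp_left (star b))

end OrthogonalPositiveElements

section Unitization

lemma inr_snd_mul_inr_mul {R A : Type*} [CommSemiring R] [NonUnitalSemiring A] [Module R A]
    (s t : Unitization R A) (e : A) : ((s * e * t).snd : Unitization R A) = s * e * t := by
  ext <;> simp

variable {𝕜 A : Type*} [NontriviallyNormedField 𝕜] [NonUnitalNormedRing A] [NormedSpace 𝕜 A]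

section Extend

variable {V : Type*} [AddCommMonoid V] [Module 𝕜 V] [TopologicalSpace V] [ContinuousAdd V]
  [ContinuousSMul 𝕜 V]

/-- The linear extension of `ψ : A → V` to the unitization of `A` that sends the unit to `T`. -/
def extendUnitization (ψ : A →L[𝕜] V) (T : V) : Unitization 𝕜 A →L[𝕜] V where
  toFun z := z.fst • T + ψ z.snd
  map_add' z w := by
    simp only [Unitization.fst_add, Unitization.snd_add, map_add, add_smul]
    abel
  map_smul' c z := by simp [smul_smul]
  cont := (Unitization.continuous_fst.smul continuous_const).add
    (ψ.continuous.comp Unitization.continuous_snd)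

lemma extendUnitization_inr (ψ : A →L[𝕜] V) (T : V) (a : A) :
    extendUnitization ψ T (a : Unitization 𝕜 A) = ψ a := by
  simp [extendUnitization]

end Extend

variable [IsScalarTower 𝕜 A A]

lemma tendsto_snd_mul_inr_mul {l : Filter A} (hl : l.IsApproximateUnit) (s t : Unitization 𝕜 A) :
    Tendsto (fun e : A => (s * e * t).snd - (s * t).fst • e) l (𝓝 (s * t).snd) := by
  have hlim := (((hl.tendsto_mul_right t.snd).const_smul s.fst).add
    ((hl.tendsto_mul_left s.snd).const_smul t.fst)).add
    ((hl.tendsto_mul_left s.snd).mul_const t.snd)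
  convert hlim using 2 with e
  · simp [add_mul, smul_mul_assoc, mul_smul, smul_comm t.fst s.fst]
    abel
  · exact Unitization.snd_mul s t

variable [SMulCommClass 𝕜 A A] [RegularNormedAlgebra 𝕜 A]

lemma norm_fst_le_norm (z : Unitization 𝕜 A) : ‖z.fst‖ ≤ ‖z‖ := by
  rw [Unitization.norm_eq_sup]
  exact le_sup_left

lemma norm_snd_le_two_mul_norm (z : Unitization 𝕜 A) : ‖z.snd‖ ≤ 2 * ‖z‖ := by
  have hz : (z.snd : Unitization 𝕜 A) = z - algebraMap 𝕜 _ z.fst := by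
    rw [eq_sub_iff_add_eq', Unitization.algebraMap_eq_inl, Unitization.inl_fst_add_inr_snd_eq]
  calc ‖z.snd‖ = ‖z - algebraMap 𝕜 _ z.fst‖ := by rw [← hz, Unitization.norm_inr]
    _ ≤ ‖z‖ + ‖z.fst‖ := (norm_sub_le _ _).trans_eq (by rw [norm_algebraMap'])
    _ ≤ 2 * ‖z‖ := by linarith [norm_fst_le_norm z]

end Unitization

section PositiveUnitization

variable {A : Type*} [NonUnitalCStarAlgebra A]

lemma norm_snd_sqrt_mul_inr_mul_sqrt_le {y : Unitization ℂ A} (hy : 0 ≤ y) {e : A}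
    (he : ‖e‖ ≤ 1) : ‖(CFC.sqrt y * e * CFC.sqrt y).snd‖ ≤ ‖y‖ := by
  have hsqrt : ‖CFC.sqrt y‖ * ‖CFC.sqrt y‖ = ‖y‖ := by
    rw [← pow_two, ← (CFC.sqrt_nonneg y).isSelfAdjoint.norm_mul_self, CFC.sqrt_mul_sqrt_self y hy]
  rw [← Unitization.norm_inr (𝕜 := ℂ), inr_snd_mul_inr_mul]
  calc ‖CFC.sqrt y * (e : Unitization ℂ A) * CFC.sqrt y‖
      ≤ ‖CFC.sqrt y‖ * ‖(e : Unitization ℂ A)‖ * ‖CFC.sqrt y‖ := norm_mul₃_le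
    _ ≤ ‖CFC.sqrt y‖ * 1 * ‖CFC.sqrt y‖ := by rw [Unitization.norm_inr]; gcongr
    _ = ‖y‖ := by rw [mul_one, hsqrt]

lemma mul_snd_sqrt_mul_inr_mul_sqrt_eq_zero {x : A} {y : Unitization ℂ A} (hy : 0 ≤ y)
    (hxy : (x : Unitization ℂ A) * y = 0) (e : A) :
    x * (CFC.sqrt y * e * CFC.sqrt y).snd = 0 := by
  apply Unitization.inr_injective (R := ℂ)
  rw [Unitization.inr_mul, inr_snd_mul_inr_mul, ← mul_assoc, ← mul_assoc,
    mul_sqrt_eq_zero hy hxy, zero_mul, zero_mul, Unitization.inr_zero]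

lemma snd_sqrt_mul_inr_mul_sqrt_mul_eq_zero {x : A} {y : Unitization ℂ A} (hy : 0 ≤ y)
    (hyx : y * (x : Unitization ℂ A) = 0) (e : A) :
    (CFC.sqrt y * e * CFC.sqrt y).snd * x = 0 := by
  apply Unitization.inr_injective (R := ℂ)
  rw [Unitization.inr_mul, inr_snd_mul_inr_mul, mul_assoc, sqrt_mul_eq_zero hy hyx, mul_zero,
    Unitization.inr_zero]

lemma snd_mul_inr_mul_nonneg [PartialOrder A] [StarOrderedRing A] {s : Unitization ℂ A}
    (hs : IsSelfAdjoint s) {e : A} (he : 0 ≤ e) :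
    0 ≤ (s * e * s).snd := by
  rw [← Unitization.inr_nonneg_iff, inr_snd_mul_inr_mul]
  exact hs.conjugate_nonneg (Unitization.inr_nonneg_iff.mpr he)

end PositiveUnitization

section Extension

open ContinuousLinearMapWOT

variable {A H : Type*} [NonUnitalCStarAlgebra A] [NormedAddCommGroup H] [InnerProductSpace ℂ H]
  {ψ : A →L[ℂ] H →L[ℂ] H} {T : H →L[ℂ] H} {l : Filter A}

lemma tendsto_ofCLM_map_snd_mul_inr_mul (hl : l.IsApproximateUnit)
    (hT : Tendsto (fun e => ofCLM (ψ e)) l (𝓝 (ofCLM T))) (s t : Unitization ℂ A) :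
    Tendsto (fun e : A => ofCLM (ψ (s * e * t).snd)) l
      (𝓝 (ofCLM (extendUnitization ψ T (s * t)))) := by
  have hdiff := ((continuous_ofCLM.comp ψ.continuous).tendsto _).comp
    (tendsto_snd_mul_inr_mul hl s t)
  convert (hT.const_smul (s * t).fst).add hdiff using 2 with e
  · simp
  · rfl

lemma extendUnitization_mem_centralizer_centralizer [l.NeBot]
    (hT : Tendsto (fun e => ofCLM (ψ e)) l (𝓝 (ofCLM T))) (z : Unitization ℂ A) :
    extendUnitization ψ T z ∈ Set.centralizer (Set.centralizer (Set.range ψ)) := by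
  have hψ (a : A) : ψ a ∈ Set.centralizer (Set.centralizer (Set.range ψ)) :=
    Set.subset_centralizer_centralizer ⟨a, rfl⟩
  intro S hS
  have hTS : S * T = T * S := ofCLM_injective <|
    tendsto_nhds_unique (hT.const_mul (ofCLM S)) <|
      (hT.mul_const (ofCLM S)).congr fun e => congrArg ofCLM (hψ e S hS).symm
  change S * (z.fst • T + ψ z.snd) = (z.fst • T + ψ z.snd) * S
  rw [mul_add, add_mul, mul_smul_comm, smul_mul_assoc, hTS, hψ z.snd S hS]

variable [CompleteSpace H] [PartialOrder A] [StarOrderedRing A]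

lemma exists_isIncreasingApproximateUnit_tendsto_ofCLM (ψ : A →L[ℂ] H →L[ℂ] H) :
    ∃ (l : Filter A) (T : H →L[ℂ] H), l.IsIncreasingApproximateUnit ∧
      Tendsto (fun e => ofCLM (ψ e)) l (𝓝 (ofCLM T)) := by
  have hunit := CStarAlgebra.increasingApproximateUnit A
  let U := Ultrafilter.of (CStarAlgebra.approximateUnit A)
  have hU : (U : Filter A) ≤ CStarAlgebra.approximateUnit A := Ultrafilter.of_le _
  have hbound : ∀ᶠ e in (U : Filter A), ‖ψ e‖ ≤ ‖ψ‖ := by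
    filter_upwards [hU hunit.eventually_norm] with e he
    simpa using ψ.le_opNorm_of_le he
  obtain ⟨T, -, hT⟩ := (isCompact_setOf_norm_toCLM_le ‖ψ‖).ultrafilter_le_nhds'
    (U.map fun e => ofCLM (ψ e)) hbound
  exact ⟨U, T.toCLM, {
    tendsto_mul_left := fun m => (hunit.tendsto_mul_left m).mono_left hU
    tendsto_mul_right := fun m => (hunit.tendsto_mul_right m).mono_left hU
    neBot := U.neBot
    eventually_nonneg := hU hunit.eventually_nonneg
    eventually_norm := hU hunit.eventually_norm }, hT⟩

lemma IsEpsOrderZero.norm_map_mul_extendUnitization_le {ε : ℝ} (hε : 0 ≤ ε)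
    (hψ : IsEpsOrderZero ε ψ) (hl : l.IsIncreasingApproximateUnit)
    (hT : Tendsto (fun e => ofCLM (ψ e)) l (𝓝 (ofCLM T))) {x : A} {y : Unitization ℂ A}
    (hx : 0 ≤ x) (hy : 0 ≤ y) (hxy : (x : Unitization ℂ A) * y = 0) :
    ‖ψ x * extendUnitization ψ T y‖ ≤ ε * ‖x‖ * ‖y‖ := by
  have := hl.neBot
  have hlim := tendsto_ofCLM_map_snd_mul_inr_mul hl.toIsApproximateUnit hT (CFC.sqrt y) (CFC.sqrt y)
  rw [CFC.sqrt_mul_sqrt_self y hy] at hlim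
  refine (isClosed_setOf_norm_toCLM_le _).mem_of_tendsto (hlim.const_mul (ofCLM (ψ x))) ?_
  filter_upwards [hl.eventually_nonneg, hl.eventually_norm] with e he he_norm
  calc ‖ψ x * ψ (CFC.sqrt y * e * CFC.sqrt y).snd‖
      ≤ ε * ‖x‖ * ‖(CFC.sqrt y * e * CFC.sqrt y).snd‖ :=
        hψ _ _ hx (snd_mul_inr_mul_nonneg (CFC.sqrt_nonneg y).isSelfAdjoint he)
          (mul_snd_sqrt_mul_inr_mul_sqrt_eq_zero hy hxy e)
    _ ≤ ε * ‖x‖ * ‖y‖ := by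
        gcongr
        exact norm_snd_sqrt_mul_inr_mul_sqrt_le hy he_norm

lemma IsEpsOrderZero.norm_extendUnitization_mul_map_le {ε : ℝ} (hε : 0 ≤ ε)
    (hψ : IsEpsOrderZero ε ψ) (hl : l.IsIncreasingApproximateUnit)
    (hT : Tendsto (fun e => ofCLM (ψ e)) l (𝓝 (ofCLM T))) {x : Unitization ℂ A} {y : A}
    (hx : 0 ≤ x) (hy : 0 ≤ y) (hxy : x * (y : Unitization ℂ A) = 0) :
    ‖extendUnitization ψ T x * ψ y‖ ≤ ε * ‖x‖ * ‖y‖ := by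
  have := hl.neBot
  have hlim := tendsto_ofCLM_map_snd_mul_inr_mul hl.toIsApproximateUnit hT (CFC.sqrt x) (CFC.sqrt x)
  rw [CFC.sqrt_mul_sqrt_self x hx] at hlim
  refine (isClosed_setOf_norm_toCLM_le _).mem_of_tendsto (hlim.mul_const (ofCLM (ψ y))) ?_
  filter_upwards [hl.eventually_nonneg, hl.eventually_norm] with e he he_norm
  calc ‖ψ (CFC.sqrt x * e * CFC.sqrt x).snd * ψ y‖
      ≤ ε * ‖(CFC.sqrt x * e * CFC.sqrt x).snd‖ * ‖y‖ :=
        hψ _ _ (snd_mul_inr_mul_nonneg (CFC.sqrt_nonneg x).isSelfAdjoint he) hy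
          (snd_sqrt_mul_inr_mul_sqrt_mul_eq_zero hx hxy e)
    _ ≤ ε * ‖x‖ * ‖y‖ := by
        gcongr
        exact norm_snd_sqrt_mul_inr_mul_sqrt_le hx he_norm

lemma isEpsOrderZero_extendUnitization {ε : ℝ} (hε : 0 ≤ ε) (hψ : IsEpsOrderZero ε ψ)
    (hl : l.IsIncreasingApproximateUnit) (hT : Tendsto (fun e => ofCLM (ψ e)) l (𝓝 (ofCLM T))) :
    IsEpsOrderZero ε (extendUnitization ψ T) := by
  intro x y hx hy hxy
  have hfst : x.fst * y.fst = 0 := by rw [← Unitization.fst_mul, hxy, Unitization.fst_zero]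
  rcases mul_eq_zero.mp hfst with hx_fst | hy_fst
  · obtain ⟨a, rfl⟩ : ∃ a : A, (a : Unitization ℂ A) = x := ⟨x.snd, by ext <;> simp [hx_fst]⟩
    rw [extendUnitization_inr, Unitization.norm_inr]
    exact hψ.norm_map_mul_extendUnitization_le hε hl hT (Unitization.inr_nonneg_iff.mp hx) hy hxy
  · obtain ⟨b, rfl⟩ : ∃ b : A, (b : Unitization ℂ A) = y := ⟨y.snd, by ext <;> simp [hy_fst]⟩
    rw [extendUnitization_inr, Unitization.norm_inr]
    exact hψ.norm_extendUnitization_mul_map_le hε hl hT hx (Unitization.inr_nonneg_iff.mp hy) hxy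

lemma IsDeltaSelfAdjoint.norm_sub_star_le_of_tendsto {δ : ℝ} (hδ : 0 ≤ δ)
    (hψ : IsDeltaSelfAdjoint δ ψ) (hl : l.IsIncreasingApproximateUnit)
    (hT : Tendsto (fun e => ofCLM (ψ e)) l (𝓝 (ofCLM T))) : ‖T - star T‖ ≤ δ := by
  have := hl.neBot
  refine (isClosed_setOf_norm_toCLM_le δ).mem_of_tendsto (hT.sub hT.star) ?_
  filter_upwards [hl.eventually_star_eq, hl.eventually_norm] with e he he_norm
  calc ‖ψ e - star (ψ e)‖ ≤ δ * ‖e‖ := by simpa only [he] using hψ e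
    _ ≤ δ := mul_le_of_le_one_right hδ he_norm

lemma isDeltaSelfAdjoint_extendUnitization {δ : ℝ} (hδ : 0 ≤ δ) (hψ : IsDeltaSelfAdjoint δ ψ)
    (hl : l.IsIncreasingApproximateUnit) (hT : Tendsto (fun e => ofCLM (ψ e)) l (𝓝 (ofCLM T))) :
    IsDeltaSelfAdjoint (3 * δ) (extendUnitization ψ T) := by
  intro z
  have hdefect : extendUnitization ψ T (star z) - star (extendUnitization ψ T z) =
      star z.fst • (T - star T) + (ψ (star z.snd) - star (ψ z.snd)) := by
    simp only [extendUnitization, ContinuousLinearMap.coe_mk', LinearMap.coe_mk,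
      AddHom.coe_mk, Unitization.fst_star, Unitization.snd_star, star_add, star_smul, smul_sub]
    abel
  calc ‖extendUnitization ψ T (star z) - star (extendUnitization ψ T z)‖
      ≤ ‖z.fst‖ * ‖T - star T‖ + ‖ψ (star z.snd) - star (ψ z.snd)‖ := by
        rw [hdefect, ← norm_star z.fst, ← norm_smul]
        exact norm_add_le _ _
    _ ≤ ‖z‖ * δ + δ * (2 * ‖z‖) := by
        gcongr
        · exact norm_fst_le_norm z
        · exact hψ.norm_sub_star_le_of_tendsto hδ hl hT
        · exact (hψ z.snd).trans (by gcongr; exact norm_snd_le_two_mul_norm z)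
    _ = 3 * δ * ‖z‖ := by ring

end Extension

section Permanence

variable {A B C : Type*} [NonUnitalCStarAlgebra A] [NonUnitalCStarAlgebra B]
  [NonUnitalCStarAlgebra C] {ε δ : ℝ} {φ : A →L[ℂ] B}

/-- A `*`-homomorphism of C*-algebras as a continuous linear map, so that it can be composed with
the maps of `IsEpsOrderZero` and `IsDeltaSelfAdjoint`. -/
def starHomCLM (π : B →⋆ₙₐ[ℂ] C) : B →L[ℂ] C :=
  ⟨(π : B →ₗ[ℂ] C), map_continuous π⟩

lemma IsDeltaSelfAdjoint.starHom_comp (hφ : IsDeltaSelfAdjoint δ φ) (π : B →⋆ₙₐ[ℂ] C) :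
    IsDeltaSelfAdjoint δ ((starHomCLM π).comp φ) := by
  intro x
  calc ‖π (φ (star x)) - star (π (φ x))‖ = ‖π (φ (star x) - star (φ x))‖ := by
        rw [map_sub, map_star π]
    _ ≤ ‖φ (star x) - star (φ x)‖ := NonUnitalStarAlgHom.norm_apply_le π _
    _ ≤ δ * ‖x‖ := hφ x

lemma IsDeltaSelfAdjoint.mono (hφ : IsDeltaSelfAdjoint δ φ) {δ' : ℝ} (h : δ ≤ δ') :
    IsDeltaSelfAdjoint δ' φ :=
  fun x => (hφ x).trans (by gcongr)

lemma IsDeltaSelfAdjoint.nonneg (hφ : IsDeltaSelfAdjoint δ φ) {x : A} (hx : x ≠ 0) : 0 ≤ δ :=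
  nonneg_of_mul_nonneg_left ((norm_nonneg _).trans (hφ x)) (norm_pos_iff.mpr hx)

variable [PartialOrder A] [StarOrderedRing A]

lemma IsEpsOrderZero.starHom_comp (hφ : IsEpsOrderZero ε φ) (π : B →⋆ₙₐ[ℂ] C) :
    IsEpsOrderZero ε ((starHomCLM π).comp φ) := by
  intro x y hx hy hxy
  calc ‖π (φ x) * π (φ y)‖ = ‖π (φ x * φ y)‖ := by rw [map_mul]
    _ ≤ ‖φ x * φ y‖ := NonUnitalStarAlgHom.norm_apply_le π _
    _ ≤ ε * ‖x‖ * ‖y‖ := hφ x y hx hy hxy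

lemma IsEpsOrderZero.nonneg (hφ : IsEpsOrderZero ε φ) {x y : A} (hx : 0 ≤ x) (hy : 0 ≤ y)
    (hxy : x * y = 0) (hx_ne : x ≠ 0) (hy_ne : y ≠ 0) : 0 ≤ ε := by
  have hprod : 0 ≤ ε * (‖x‖ * ‖y‖) :=
    mul_assoc ε _ _ ▸ (norm_nonneg _).trans (hφ x y hx hy hxy)
  exact nonneg_of_mul_nonneg_left hprod
    (mul_pos (norm_pos_iff.mpr hx_ne) (norm_pos_iff.mpr hy_ne))

end Permanence

theorem stmt_5_general {A B H : Type*} [NonUnitalCStarAlgebra A] [PartialOrder A]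
    [StarOrderedRing A] [NonUnitalCStarAlgebra B] [NormedAddCommGroup H] [InnerProductSpace ℂ H]
    [CompleteSpace H] (π : B →⋆ₙₐ[ℂ] (H →L[ℂ] H)) {ε : ℝ} (hε : 0 ≤ ε) (φ : A →L[ℂ] B)
    (hφ : IsEpsOrderZero ε φ) :
    ∃ φdag : Unitization ℂ A →L[ℂ] (H →L[ℂ] H),
      (∀ z : Unitization ℂ A,
        φdag z ∈ Set.centralizer (Set.centralizer (Set.range (⇑π)))) ∧
      (∀ x : A, φdag (x : Unitization ℂ A) = π (φ x)) ∧
      IsEpsOrderZero ε φdag ∧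
      (∀ δ : ℝ, 0 ≤ δ → IsDeltaSelfAdjoint δ φ → IsDeltaSelfAdjoint (3 * δ) φdag) := by
  let ψ : A →L[ℂ] H →L[ℂ] H := (starHomCLM π).comp φ
  obtain ⟨l, T, hl, hT⟩ := exists_isIncreasingApproximateUnit_tendsto_ofCLM ψ
  have := hl.neBot
  have hrange : Set.range ψ ⊆ Set.range π := Set.range_comp_subset_range φ π
  exact ⟨extendUnitization ψ T,
    fun z => Set.centralizer_subset (Set.centralizer_subset hrange)
      (extendUnitization_mem_centralizer_centralizer hT z),
    extendUnitization_inr ψ T,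
    isEpsOrderZero_extendUnitization hε (hφ.starHom_comp π) hl hT,
    fun δ hδ hφδ => isDeltaSelfAdjoint_extendUnitization hδ (hφδ.starHom_comp π) hl hT⟩

/-- Let `A` be a nonunital C*-algebra, `π : B → B(H)` a nondegenerate
representation of a C*-algebra `B` on a Hilbert space `H`, and `φ : A → B` a bounded linear
ε-order zero map.  Then there is a bounded linear extension `φ† : A† → B(H)` of `π ∘ φ` to the
unitization `A†`, taking values in the double commutant `π(B)''`, which is still ε-order zero;
moreover, if `φ` is δ-self-adjoint then `φ†` can be chosen to be 6δ-self-adjoint. -/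
theorem stmt_5 {A B H : Type*} [NonUnitalCStarAlgebra A] [PartialOrder A] [StarOrderedRing A]
    [NonUnitalCStarAlgebra B] [NormedAddCommGroup H] [InnerProductSpace ℂ H] [CompleteSpace H]
    (h_nonunital : ¬ ∃ e : A, ∀ a : A, e * a = a ∧ a * e = a)
    (π : B →⋆ₙₐ[ℂ] (H →L[ℂ] H))
    (h_nondeg :
      (Submodule.span ℂ {v : H | ∃ (b : B) (ξ : H), v = π b ξ}).topologicalClosure = ⊤)
    (ε δ : ℝ) (φ : A →L[ℂ] B) (hφ : IsEpsOrderZero ε φ) :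
    ∃ φdag : Unitization ℂ A →L[ℂ] (H →L[ℂ] H),
      (∀ z : Unitization ℂ A,
        φdag z ∈ Set.centralizer (Set.centralizer (Set.range (⇑π)))) ∧
      (∀ x : A, φdag (x : Unitization ℂ A) = π (φ x)) ∧
      IsEpsOrderZero ε φdag ∧
      (IsDeltaSelfAdjoint δ φ → IsDeltaSelfAdjoint (6 * δ) φdag) := by
  obtain ⟨x, y, hx, hy, hxy, hx_ne, hy_ne⟩ :=
    exists_nonneg_mul_eq_zero_of_not_exists_unit h_nonunital
  obtain ⟨φdag, hmem, hext, horder, hsa⟩ :=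
    stmt_5_general π (hφ.nonneg hx hy hxy hx_ne hy_ne) φ hφ
  refine ⟨φdag, hmem, hext, horder, fun hδ => ?_⟩
  have hδ_nonneg : 0 ≤ δ := hδ.nonneg hx_ne
  exact (hsa δ hδ_nonneg hδ).mono (by linarith)
end

section
/- Let X be a metric space and let f : X → ℝ be a nonnegative bounded function of Baire class 1, meaning that for every open set U ⊆ ℝ the preimage f⁻¹(U) is an Fσ set (a countable union of closed sets). Then there exists a sequence (f_n) of nonnegative simple functions f_n : X → [0,∞) (each taking finitely many values) converging pointwise to f, such that for every n: the set {x : f_n(x) > 0} is contained in {x : f(x) > 0}, sup_x f_n(x) ≤ sup_x f(x), and for every t > 0 the set f_n⁻¹({t}) is an Fσ set. -/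
/-- A set is Fσ if it is a countable union of closed sets. -/
def IsFsigma {X : Type*} [TopologicalSpace X] (A : Set X) : Prop :=
  ∃ F : ℕ → Set X, (∀ n, IsClosed (F n)) ∧ A = ⋃ n, F n

/-!
Fix a countable dense set of values `d` and write each `{f > d}` as a countable union of closed
sets `C`. Then `f` is the pointwise supremum of the countably many step functions equal to
`max 0 d` on `C` and to `0` off `C`, so the suprema of finitely many of them increase to `f`.
Each `C` is closed and its complement is open, hence both are Fσ, so these step functions have Fσ
fibres; this property passes to finite suprema because Fσ sets are closed under finite
intersections and countable unions.
-/

open Set Filter Topology TopologicalSpace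

section Fsigma

variable {X : Type*} [TopologicalSpace X]

namespace IsFsigma

theorem of_isClosed {A : Set X} (hA : IsClosed A) : IsFsigma A :=
  ⟨fun _ => A, fun _ => hA, (iUnion_const A).symm⟩

theorem iUnion_of_isClosed {ι : Type*} [Countable ι] {F : ι → Set X}
    (hF : ∀ i, IsClosed (F i)) : IsFsigma (⋃ i, F i) := by
  cases isEmpty_or_nonempty ι with
  | inl _ =>
    refine ⟨fun _ => ∅, fun _ => isClosed_empty, ?_⟩
    rw [iUnion_of_empty, iUnion_empty]
  | inr _ =>
    obtain ⟨e, he⟩ := exists_surjective_nat ι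
    exact ⟨F ∘ e, fun n => hF (e n), (he.iUnion_comp F).symm⟩

theorem of_isOpen {Y : Type*} [PseudoEMetricSpace Y] {U : Set Y} (hU : IsOpen U) : IsFsigma U :=
  let ⟨F, hF, _, hFU, _⟩ := hU.exists_iUnion_isClosed
  ⟨F, hF, hFU.symm⟩

theorem iUnion {ι : Type*} [Countable ι] {A : ι → Set X} (hA : ∀ i, IsFsigma (A i)) :
    IsFsigma (⋃ i, A i) := by
  choose F hF hAF using hA
  simp only [hAF]
  rw [iUnion_sigma']
  exact iUnion_of_isClosed fun p => hF p.1 p.2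

theorem inter {A B : Set X} (hA : IsFsigma A) (hB : IsFsigma B) : IsFsigma (A ∩ B) := by
  obtain ⟨F, hF, rfl⟩ := hA
  obtain ⟨G, hG, rfl⟩ := hB
  rw [iUnion_inter_iUnion]
  exact iUnion fun m => .iUnion fun n => .of_isClosed ((hF m).inter (hG n))

end IsFsigma

/-- A simple function with Fσ fibres, the approximants of a function of Baire class 1. The fibre
over `0` is required to be Fσ as well, which makes the class stable under composition. -/
structure IsFsigmaSimple {α : Type*} (g : X → α) : Prop where
  finite_range : (range g).Finite
  isFsigma_fiber : ∀ a, IsFsigma (g ⁻¹' {a})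

namespace IsFsigmaSimple

variable {α β : Type*}

theorem isFsigma_preimage {g : X → α} (hg : IsFsigmaSimple g) (S : Set α) :
    IsFsigma (g ⁻¹' S) := by
  have := (hg.finite_range.subset inter_subset_right : (S ∩ range g).Finite).countable.to_subtype
  rw [← preimage_inter_range, ← biUnion_preimage_singleton, biUnion_eq_iUnion]
  exact .iUnion fun a => hg.isFsigma_fiber a

theorem comp {g : X → α} (hg : IsFsigmaSimple g) (φ : α → β) : IsFsigmaSimple (φ ∘ g) where
  finite_range := range_comp φ g ▸ hg.finite_range.image φ
  isFsigma_fiber b := hg.isFsigma_preimage (φ ⁻¹' {b})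

theorem prodMk {g : X → α} {h : X → β} (hg : IsFsigmaSimple g) (hh : IsFsigmaSimple h) :
    IsFsigmaSimple fun x => (g x, h x) where
  finite_range := (hg.finite_range.prod hh.finite_range).subset <|
    range_subset_iff.2 fun x => ⟨mem_range_self x, mem_range_self x⟩
  isFsigma_fiber := fun (a, b) => by
    rw [← singleton_prod_singleton, mk_preimage_prod]
    exact (hg.isFsigma_fiber a).inter (hh.isFsigma_fiber b)

theorem sup [Max α] {g h : X → α} (hg : IsFsigmaSimple g) (hh : IsFsigmaSimple h) :
    IsFsigmaSimple (g ⊔ h) :=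
  (hg.prodMk hh).comp fun p => p.1 ⊔ p.2

theorem partialSups {ι : Type*} [Preorder ι] [LocallyFiniteOrderBot ι] [SemilatticeSup α]
    {s : ι → X → α} (hs : ∀ i, IsFsigmaSimple (s i)) (i : ι) :
    IsFsigmaSimple (partialSups s i) := by
  rw [partialSups_apply]
  exact Finset.sup'_induction _ _ (fun _ hg _ hh => hg.sup hh) fun j _ => hs j

theorem indicator_const [Zero α] {A : Set X} (hA : IsFsigma A) (hAc : IsFsigma Aᶜ) (a : α) :
    IsFsigmaSimple (A.indicator fun _ => a) where
  finite_range := (toFinite {0, a}).subset <| range_subset_iff.2 <|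
    indicator_eq_zero_or_self A fun _ => a
  isFsigma_fiber b := by
    obtain h | h | h | h := indicator_const_preimage A {b} a <;> rw [h]
    exacts [.of_isClosed isClosed_univ, hA, hAc, .of_isClosed isClosed_empty]

end IsFsigmaSimple

end Fsigma

section Approximation

theorem tendsto_partialSups_of_isLUB {ι α : Type*} [Preorder ι] [LocallyFiniteOrderBot ι]
    [SemilatticeSup α] [TopologicalSpace α] [SupConvergenceClass α] {s : ι → α} {a : α}
    (h : IsLUB (range s) a) : Tendsto (partialSups s) atTop (𝓝 a) := by
  refine tendsto_atTop_isLUB (partialSups_monotone s) ?_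
  rwa [IsLUB, upperBounds_range_partialSups]

variable {X α : Type*} [LinearOrder α] [TopologicalSpace α] [DenselyOrdered α] [Zero α]

theorem isLUB_range_indicator_of_preimage_Ioi_eq_iUnion [OrderClosedTopology α]
    {ι κ : Type*} {d : ι → α} (hd : DenseRange d) {f : X → α} (hf : ∀ x, 0 ≤ f x)
    {C : ι → κ → Set X} (hC : ∀ i, f ⁻¹' Ioi (d i) = ⋃ k, C i k) (x : X) :
    IsLUB (range fun p : ι × κ => (C p.1 p.2).indicator (fun _ => max 0 (d p.1)) x) (f x) := by
  have mem_iff (i : ι) : d i < f x ↔ ∃ k, x ∈ C i k := by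
    rw [← mem_iUnion, ← hC, mem_preimage, mem_Ioi]
  constructor
  · rintro _ ⟨⟨i, k⟩, rfl⟩
    exact indicator_apply_le' (fun hx => max_le (hf x) ((mem_iff i).2 ⟨k, hx⟩).le) fun _ => hf x
  · intro b hb
    by_contra! hbf
    obtain ⟨_, ⟨i, rfl⟩, hbd, hdf⟩ := hd.exists_between hbf
    obtain ⟨k, hxk⟩ := (mem_iff i).1 hdf
    have hmax : max 0 (d i) ≤ b := by
      simpa only [indicator_of_mem hxk] using hb (mem_range_self (i, k))
    exact ((le_max_right 0 (d i)).trans hmax).not_gt hbd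

variable [TopologicalSpace X]

theorem exists_seq_isFsigmaSimple_isLUB [OrderClosedTopology α] [SeparableSpace α]
    (hX : ∀ U : Set X, IsOpen U → IsFsigma U) {f : X → α} (hf_nonneg : ∀ x, 0 ≤ f x)
    (hf : ∀ a, IsFsigma (f ⁻¹' Ioi a)) :
    ∃ s : ℕ → X → α, (∀ n, IsFsigmaSimple (s n)) ∧ (∀ n x, 0 ≤ s n x) ∧
      ∀ x, IsLUB (range fun n => s n x) (f x) := by
  obtain ⟨d, hd⟩ := exists_dense_seq α
  choose C hC hfC using fun i => hf (d i)
  refine ⟨fun n => (C n.unpair.1 n.unpair.2).indicator fun _ => max 0 (d n.unpair.1),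
    fun n => .indicator_const (.of_isClosed (hC _ _)) (hX _ (hC _ _).isOpen_compl) _,
    fun n => indicator_nonneg fun _ _ => le_max_left _ _, fun x => ?_⟩
  have hLUB := isLUB_range_indicator_of_preimage_Ioi_eq_iUnion hd hf_nonneg hfC x
  rwa [← Nat.surjective_unpair.range_comp] at hLUB

theorem stmt_17_general [OrderTopology α] [SeparableSpace α]
    (hX : ∀ U : Set X, IsOpen U → IsFsigma U) {f : X → α} (hf_nonneg : ∀ x, 0 ≤ f x)
    (hf : ∀ a, IsFsigma (f ⁻¹' Ioi a)) :
    ∃ fn : ℕ → X → α, Monotone fn ∧ (∀ n, IsFsigmaSimple (fn n)) ∧ (∀ n x, 0 ≤ fn n x) ∧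
      (∀ n x, fn n x ≤ f x) ∧ ∀ x, Tendsto (fun n => fn n x) atTop (𝓝 (f x)) := by
  obtain ⟨s, hs, hs_nonneg, hLUB⟩ := exists_seq_isFsigmaSimple_isLUB hX hf_nonneg hf
  exact ⟨partialSups s, partialSups_monotone s, .partialSups hs,
    fun n x => (hs_nonneg n x).trans (le_partialSups s n x),
    fun n => partialSups_le s n f fun i _ x => (hLUB x).1 (mem_range_self i),
    fun x => by simpa only [Pi.partialSups_apply] using tendsto_partialSups_of_isLUB (hLUB x)⟩

end Approximation

/-- Let `f : X → ℝ` be a nonnegative bounded function of Baire class 1 on a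
metric space `X` (preimages of open sets are Fσ). Then there is a sequence of nonnegative
simple functions `fn` converging pointwise to `f` such that each `fn` vanishes wherever `f`
does, `sup fn ≤ sup f`, and for every `t > 0` the level set `fn⁻¹({t})` is Fσ. -/
theorem stmt_17 {X : Type*} [MetricSpace X] (f : X → ℝ)
    (hf_nonneg : ∀ x, 0 ≤ f x) (hf_bdd : BddAbove (Set.range f))
    (hf_baire : ∀ U : Set ℝ, IsOpen U → IsFsigma (f ⁻¹' U)) :
    ∃ fn : ℕ → X → ℝ,
      (∀ n x, 0 ≤ fn n x) ∧
      (∀ n, (Set.range (fn n)).Finite) ∧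
      (∀ x, Filter.Tendsto (fun n => fn n x) Filter.atTop (nhds (f x))) ∧
      (∀ n, {x | 0 < fn n x} ⊆ {x | 0 < f x}) ∧
      (∀ n, ⨆ x, fn n x ≤ ⨆ x, f x) ∧
      (∀ n, ∀ t : ℝ, 0 < t → IsFsigma (fn n ⁻¹' {t})) := by
  obtain ⟨fn, -, hfn, h_nonneg, h_le, h_tendsto⟩ := stmt_17_general
    (fun _ => IsFsigma.of_isOpen) hf_nonneg fun _ => hf_baire _ isOpen_Ioi
  exact ⟨fn, h_nonneg, fun n => (hfn n).finite_range, h_tendsto,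
    fun n x hx => hx.trans_le (h_le n x), fun n => ciSup_mono hf_bdd (h_le n),
    fun n t _ => (hfn n).isFsigma_fiber t⟩
end
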